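/- For every k ∈ (0,1) and every x ∈ ℝ, one has E(k)·F̃_k(x + 2π) − K(k)·Ẽ_k(x + 2π) = E(k)·F̃_k(x) − K(k)·Ẽ_k(x) + π. -/

import Mathlib

open Real

/-- Complete elliptic integral of the first kind. -/
noncomputable def ellK (k : ℝ) : ℝ :=
  ∫ θ in (0:ℝ)..(π/2), 1 / Real.sqrt (1 - k^2 * Real.sin θ ^ 2)

/-- Complete elliptic integral of the second kind. -/
noncomputable def ellE (k : ℝ) : ℝ :=
  ∫ θ in (0:ℝ)..(π/2), Real.sqrt (1 - k^2 * Real.sin θ ^ 2)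

/-- Complementary complete elliptic integral of the first kind. -/
noncomputable def ellK' (k : ℝ) : ℝ := ellK (Real.sqrt (1 - k^2))

/-- Complementary complete elliptic integral of the second kind. -/
noncomputable def ellE' (k : ℝ) : ℝ := ellE (Real.sqrt (1 - k^2))

/-- The lifted incomplete integral F̃_k. -/
noncomputable def Ftil (k x : ℝ) : ℝ :=
  (1/2) * ∫ s in (0:ℝ)..x, 1 / Real.sqrt (Real.cos (s/2) ^ 2 + k^2 * Real.sin (s/2) ^ 2)

/-- The lifted incomplete integral Ẽ_k. -/
noncomputable def Etil (k x : ℝ) : ℝ :=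
  ((1 - k^2)/2) * ∫ s in (0:ℝ)..x,
    1 / (Real.sqrt (Real.cos (s/2) ^ 2 + k^2 * Real.sin (s/2) ^ 2) + k)

/-!
Both quasi-periods of the lifted integrals are complete integrals of the complementary modulus:
`Ftil k` grows by `2 K'` and `Etil k` by `2 (K' - E')` over a period `2π`, so the theorem is
Legendre's relation `E K' + K E' - K K' = π / 2`.

In terms of the parameter `m = k ^ 2`, `K` and `E` are the members `s = -1/2` and `s = 1/2` of the
family `I s m = ∫ θ in 0..π/2, (1 - m sin² θ) ^ s`. Differentiating under the integral gives
`m * (I s)' = s * (I s - I (s - 1))`, and a three-term recurrence in `s` expresses `I (-3/2)`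
through `E`; hence the Legendre combination has derivative zero. Its value is read off as `m → 0`,
where `K` and `E` tend to `π / 2`, `E'` tends to `1`, and `(K - E) K' = O(m) O(m ^ (-1/2))` tends
to `0`.
-/

open Set Filter Topology MeasureTheory Function intervalIntegral
open scoped Interval

section IntervalIntegral

variable {E : Type*} [NormedAddCommGroup E] [NormedSpace ℝ E]

lemma hasDerivAt_intervalIntegral_of_continuousOn {F F' : ℝ → ℝ → E} {U : Set ℝ} {x₀ a b : ℝ}
    (hU : IsOpen U) (hx₀ : x₀ ∈ U) (hF : ∀ x ∈ U, ContinuousOn (F x) [[a, b]])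
    (hF' : ContinuousOn (uncurry F') (U ×ˢ [[a, b]]))
    (hderiv : ∀ x ∈ U, ∀ t ∈ [[a, b]], HasDerivAt (fun y => F y t) (F' x t) x) :
    HasDerivAt (fun x => ∫ t in a..b, F x t) (∫ t in a..b, F' x₀ t) x₀ := by
  obtain ⟨N, hN, hx₀N, hNU⟩ := exists_compact_subset hU hx₀
  obtain ⟨C, hC⟩ := (hN.prod isCompact_uIcc).exists_bound_of_continuousOn
    (hF'.mono (prod_mono hNU subset_rfl))
  have hF'x₀ : ContinuousOn (F' x₀) [[a, b]] :=
    hF'.comp (f := fun t => (x₀, t)) (by fun_prop) fun t ht => ⟨hx₀, ht⟩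
  refine (intervalIntegral.hasDerivAt_integral_of_dominated_loc_of_deriv_le (bound := fun _ => C)
    (mem_interior_iff_mem_nhds.1 hx₀N)
    ((hU.eventually_mem hx₀).mono fun x hx =>
      (hF x hx).intervalIntegrable.aestronglyMeasurable_restrict_uIoc)
    (hF x₀ hx₀).intervalIntegrable hF'x₀.intervalIntegrable.aestronglyMeasurable_restrict_uIoc
    (.of_forall fun t ht x hx => hC (x, t) ⟨hx, uIoc_subset_uIcc ht⟩) intervalIntegrable_const
    (.of_forall fun t ht x hx => hderiv x (hNU hx) t (uIoc_subset_uIcc ht))).2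

lemma integral_period_of_even {f : ℝ → E} {T : ℝ} (hf : Continuous f) (hper : Periodic f T)
    (heven : f.Even) (x : ℝ) :
    ∫ t in x..x + T, f t = (2 : ℝ) • ∫ t in (0 : ℝ)..T / 2, f t := by
  have hreflect : ∫ t in -(T / 2)..0, f t = ∫ t in (0 : ℝ)..T / 2, f t := by
    simpa only [heven _, neg_zero] using (integral_comp_neg (a := 0) (b := T / 2) f).symm
  rw [hper.intervalIntegral_add_eq x (-(T / 2)), show -(T / 2) + T = T / 2 by ring,
    ← integral_add_adjacent_intervals (hf.intervalIntegrable _ 0) (hf.intervalIntegrable 0 _),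
    hreflect, two_smul]

lemma integral_comp_div_two_add_two_mul {f : ℝ → E} {T : ℝ} (hf : Continuous f)
    (hper : Periodic f T) (heven : f.Even) (x : ℝ) :
    ∫ s in (0 : ℝ)..x + 2 * T, f (s / 2) =
      (∫ s in (0 : ℝ)..x, f (s / 2)) + (4 : ℝ) • ∫ t in (0 : ℝ)..T / 2, f t := by
  have hcomp : Continuous fun s : ℝ => f (s / 2) := by fun_prop
  rw [← integral_add_adjacent_intervals (hcomp.intervalIntegrable 0 x)
    (hcomp.intervalIntegrable x _), intervalIntegral.integral_comp_div (a := x) f two_ne_zero,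
    show (x + 2 * T) / 2 = x / 2 + T by ring, integral_period_of_even hf hper heven, smul_smul]
  norm_num

end IntervalIntegral

/-- The radicand `1 - m sin² θ` of the elliptic integrals, in terms of the parameter `m = k ^ 2`
(so that the complementary modulus corresponds to `1 - m`). -/
noncomputable def ellipticRadicand (m θ : ℝ) : ℝ := 1 - m * sin θ ^ 2

/-- The family `∫ θ in 0..π/2, (1 - m sin² θ) ^ s` containing the complete elliptic integrals of
the first (`s = -1/2`) and second (`s = 1/2`) kind. -/
noncomputable def ellipticIntegral (s m : ℝ) : ℝ := ∫ θ in (0 : ℝ)..π / 2, ellipticRadicand m θ ^ s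

/-- The complete elliptic integral of the first kind as a function of the parameter `m = k ^ 2`. -/
noncomputable abbrev ellipticK (m : ℝ) : ℝ := ellipticIntegral (-1 / 2) m

/-- The complete elliptic integral of the second kind as a function of the parameter `m = k ^ 2`. -/
noncomputable abbrev ellipticE (m : ℝ) : ℝ := ellipticIntegral (1 / 2) m

section Radicand

lemma continuous_uncurry_ellipticRadicand : Continuous (uncurry ellipticRadicand) := by
  unfold ellipticRadicand uncurry
  fun_prop

lemma continuous_ellipticRadicand (m : ℝ) : Continuous (ellipticRadicand m) := by
  unfold ellipticRadicand
  fun_prop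

lemma ellipticRadicand_periodic (m : ℝ) : Periodic (ellipticRadicand m) π := fun θ => by
  simp [ellipticRadicand, sin_add_pi]

lemma ellipticRadicand_even (m : ℝ) : (ellipticRadicand m).Even := fun θ => by
  simp [ellipticRadicand]

lemma ellipticRadicand_pos {m : ℝ} (hm : m < 1) (θ : ℝ) : 0 < ellipticRadicand m θ := by
  unfold ellipticRadicand
  nlinarith [sin_sq_le_one θ, mul_nonneg (sub_nonneg.2 hm.le) (sq_nonneg (sin θ)),
    sq_nonneg (sin θ)]

lemma one_sub_le_ellipticRadicand {m : ℝ} (hm : 0 ≤ m) (θ : ℝ) : 1 - m ≤ ellipticRadicand m θ := by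
  unfold ellipticRadicand
  nlinarith [sin_sq_le_one θ]

lemma ellipticRadicand_one_sub_sq (k θ : ℝ) :
    ellipticRadicand (1 - k ^ 2) θ = cos θ ^ 2 + k ^ 2 * sin θ ^ 2 := by
  rw [ellipticRadicand, cos_sq']
  ring

lemma hasDerivAt_ellipticRadicand_param (m θ : ℝ) :
    HasDerivAt (fun x => ellipticRadicand x θ) (-sin θ ^ 2) m :=
  (hasDerivAt_mul_const (sin θ ^ 2)).const_sub 1

lemma hasDerivAt_ellipticRadicand (m θ : ℝ) :
    HasDerivAt (ellipticRadicand m) (-(2 * m * sin θ * cos θ)) θ :=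
  ((((hasDerivAt_sin θ).pow 2).const_mul m).const_sub 1).congr_deriv (by push_cast; ring)

lemma continuous_ellipticRadicand_rpow {m : ℝ} (hm : m < 1) (s : ℝ) :
    Continuous fun θ => ellipticRadicand m θ ^ s :=
  (continuous_ellipticRadicand m).rpow_const fun θ => .inl (ellipticRadicand_pos hm θ).ne'

end Radicand

section IntegralFamily

lemma hasDerivAt_ellipticIntegral (s : ℝ) {m : ℝ} (hm : m < 1) :
    HasDerivAt (ellipticIntegral s)
      (-s * ∫ θ in (0 : ℝ)..π / 2, sin θ ^ 2 * ellipticRadicand m θ ^ (s - 1)) m := by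
  rw [← intervalIntegral.integral_const_mul]
  refine hasDerivAt_intervalIntegral_of_continuousOn
    (F' := fun x θ => -s * (sin θ ^ 2 * ellipticRadicand x θ ^ (s - 1))) isOpen_Iio hm
    (fun x hx => (continuous_ellipticRadicand_rpow hx s).continuousOn) ?_ fun x hx θ _ => ?_
  · have hpow : ContinuousOn (fun p : ℝ × ℝ => ellipticRadicand p.1 p.2 ^ (s - 1))
        (Iio 1 ×ˢ [[0, π / 2]]) :=
      continuous_uncurry_ellipticRadicand.continuousOn.rpow_const fun p hp =>
        .inl (ellipticRadicand_pos hp.1 p.2).ne'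
    unfold uncurry
    fun_prop
  · exact ((hasDerivAt_ellipticRadicand_param x θ).rpow_const
      (.inl (ellipticRadicand_pos hx θ).ne')).congr_deriv (by ring)

lemma mul_integral_sin_sq_mul_rpow (s : ℝ) {m : ℝ} (hm : m < 1) :
    m * ∫ θ in (0 : ℝ)..π / 2, sin θ ^ 2 * ellipticRadicand m θ ^ s =
      ellipticIntegral s m - ellipticIntegral (s + 1) m := by
  rw [ellipticIntegral, ellipticIntegral, ← intervalIntegral.integral_const_mul, ← integral_sub
    ((continuous_ellipticRadicand_rpow hm _).intervalIntegrable _ _)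
    ((continuous_ellipticRadicand_rpow hm _).intervalIntegrable _ _)]
  refine integral_congr fun θ _ => ?_
  simp only [rpow_add_one (ellipticRadicand_pos hm θ).ne']
  rw [ellipticRadicand]
  ring

lemma hasDerivAt_ellipticIntegral_of_ne_zero (s : ℝ) {m : ℝ} (hm₀ : m ≠ 0) (hm₁ : m < 1) :
    HasDerivAt (ellipticIntegral s)
      (s * (ellipticIntegral s m - ellipticIntegral (s - 1) m) / m) m := by
  have hsin := mul_integral_sin_sq_mul_rpow (s - 1) hm₁
  rw [sub_add_cancel] at hsin
  refine (hasDerivAt_ellipticIntegral s hm₁).congr_deriv ?_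
  rw [eq_div_iff hm₀]
  linear_combination -s * hsin

lemma hasDerivAt_sin_mul_cos_mul_rpow (s : ℝ) {m : ℝ} (hm : m < 1) (θ : ℝ) :
    HasDerivAt (fun θ => m * (sin θ * cos θ * ellipticRadicand m θ ^ s))
      (2 * (s + 1) * ellipticRadicand m θ ^ (s + 1)
        - (2 * s + 1) * (2 - m) * ellipticRadicand m θ ^ s
        + 2 * s * (1 - m) * ellipticRadicand m θ ^ (s - 1)) θ := by
  have hpos := ellipticRadicand_pos hm θ
  refine ((((hasDerivAt_sin θ).mul (hasDerivAt_cos θ)).mul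
    ((hasDerivAt_ellipticRadicand m θ).rpow_const (p := s) (.inl hpos.ne'))).const_mul
      m).congr_deriv ?_
  have hpow : ellipticRadicand m θ ^ s = ellipticRadicand m θ ^ (s - 1) * ellipticRadicand m θ := by
    rw [← rpow_add_one hpos.ne', sub_add_cancel]
  have hcos : cos θ ^ 2 = 1 - sin θ ^ 2 := cos_sq' θ
  rw [rpow_add_one hpos.ne', hpow, Pi.mul_apply]
  generalize ellipticRadicand m θ ^ (s - 1) = p
  rw [ellipticRadicand]
  linear_combination m * p * ((1 - m * sin θ ^ 2) - 2 * s * m * sin θ ^ 2) * hcos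

lemma ellipticIntegral_recurrence (s : ℝ) {m : ℝ} (hm : m < 1) :
    2 * (s + 1) * ellipticIntegral (s + 1) m - (2 * s + 1) * (2 - m) * ellipticIntegral s m
      + 2 * s * (1 - m) * ellipticIntegral (s - 1) m = 0 := by
  have hint (r c : ℝ) :
      IntervalIntegrable (fun θ => c * ellipticRadicand m θ ^ r) volume 0 (π / 2) :=
    ((continuous_ellipticRadicand_rpow hm r).const_mul c).intervalIntegrable _ _
  have hftc := integral_eq_sub_of_hasDerivAt (a := 0) (b := π / 2)
    (fun θ _ => hasDerivAt_sin_mul_cos_mul_rpow s hm θ) (((hint _ _).sub (hint _ _)).add (hint _ _))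
  rw [integral_add ((hint _ _).sub (hint _ _)) (hint _ _), integral_sub (hint _ _) (hint _ _)]
    at hftc
  simpa [ellipticIntegral] using hftc

lemma ellipticIntegral_zero_right (s : ℝ) : ellipticIntegral s 0 = π / 2 := by
  simp [ellipticIntegral, ellipticRadicand]

lemma continuous_ellipticIntegral {s : ℝ} (hs : 0 ≤ s) : Continuous (ellipticIntegral s) :=
  continuous_parametric_intervalIntegral_of_continuous'
    (continuous_uncurry_ellipticRadicand.rpow_const fun _ => .inr hs) _ _

lemma ellipticIntegral_nonneg (s : ℝ) {m : ℝ} (hm : m < 1) : 0 ≤ ellipticIntegral s m :=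
  integral_nonneg (by positivity) fun θ _ => rpow_nonneg (ellipticRadicand_pos hm θ).le s

lemma ellipticIntegral_le_of_nonpos {s m : ℝ} (hs : s ≤ 0) (hm₀ : 0 ≤ m) (hm₁ : m < 1) :
    ellipticIntegral s m ≤ π / 2 * (1 - m) ^ s := by
  have hle : ellipticIntegral s m ≤ ∫ _ in (0 : ℝ)..π / 2, (1 - m) ^ s :=
    integral_mono_on (by positivity)
      ((continuous_ellipticRadicand_rpow hm₁ s).intervalIntegrable _ _) intervalIntegrable_const
      fun θ _ => rpow_le_rpow_of_nonpos (sub_pos.2 hm₁) (one_sub_le_ellipticRadicand hm₀ θ) hs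
  simpa using hle

end IntegralFamily

section CompleteIntegrals

lemma ellipticE_one : ellipticE 1 = 1 := by
  have hcos : ellipticE 1 = ∫ θ in (0 : ℝ)..π / 2, cos θ := by
    refine integral_congr fun θ hθ => ?_
    rw [uIcc_of_le (by positivity)] at hθ
    have hθcos : 0 ≤ cos θ := cos_nonneg_of_mem_Icc ⟨by linarith [hθ.1, pi_pos], hθ.2⟩
    simp only [ellipticRadicand, one_mul, ← cos_sq', ← sqrt_eq_rpow, sqrt_sq hθcos]
  simp [hcos]

lemma one_sub_mul_ellipticIntegral_neg_three_halves {m : ℝ} (hm : m < 1) :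
    (1 - m) * ellipticIntegral (-1 / 2 - 1) m = ellipticE m := by
  have hrec := ellipticIntegral_recurrence (-1 / 2) hm
  rw [show (-1 / 2 + 1 : ℝ) = 1 / 2 by norm_num] at hrec
  linear_combination -hrec

lemma hasDerivAt_ellipticE {m : ℝ} (hm₀ : m ≠ 0) (hm₁ : m < 1) :
    HasDerivAt ellipticE ((ellipticE m - ellipticK m) / (2 * m)) m := by
  have hE := hasDerivAt_ellipticIntegral_of_ne_zero (1 / 2) hm₀ hm₁
  rw [show (1 / 2 - 1 : ℝ) = -1 / 2 by norm_num] at hE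
  exact hE.congr_deriv (by ring)

lemma hasDerivAt_ellipticK {m : ℝ} (hm₀ : m ≠ 0) (hm₁ : m < 1) :
    HasDerivAt ellipticK ((ellipticE m - (1 - m) * ellipticK m) / (2 * m * (1 - m))) m := by
  have hm : 1 - m ≠ 0 := (sub_pos.2 hm₁).ne'
  refine (hasDerivAt_ellipticIntegral_of_ne_zero (-1 / 2) hm₀ hm₁).congr_deriv ?_
  rw [div_eq_div_iff hm₀ (mul_ne_zero (mul_ne_zero two_ne_zero hm₀) hm)]
  linear_combination m * one_sub_mul_ellipticIntegral_neg_three_halves hm₁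

end CompleteIntegrals

section LegendreRelation

/-- The left-hand side `E K' + K E' - K K'` of Legendre's relation. -/
noncomputable def legendreCombination (m : ℝ) : ℝ :=
  ellipticE m * ellipticK (1 - m) + ellipticK m * ellipticE (1 - m)
    - ellipticK m * ellipticK (1 - m)

lemma hasDerivAt_legendreCombination {m : ℝ} (hm : m ∈ Ioo 0 1) :
    HasDerivAt legendreCombination 0 m := by
  have hm₀ : m ≠ 0 := hm.1.ne'
  have hm₁ : 1 - m ≠ 0 := (sub_pos.2 hm.2).ne'
  have hE := hasDerivAt_ellipticE hm₀ hm.2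
  have hK := hasDerivAt_ellipticK hm₀ hm.2
  have hE' := (hasDerivAt_ellipticE hm₁ (by linarith [hm.1])).comp_const_sub 1 m
  have hK' := (hasDerivAt_ellipticK hm₁ (by linarith [hm.1])).comp_const_sub 1 m
  refine (((hE.mul hK').add (hK.mul hE')).sub (hK.mul hK')).congr_deriv ?_
  rw [sub_sub_cancel]
  field_simp
  ring

lemma tendsto_mul_ellipticK_one_sub :
    Tendsto (fun m => m * ellipticK (1 - m)) (𝓝[>] 0) (𝓝 0) := by
  have hsqrt : Tendsto (fun m => π / 2 * √m) (𝓝[>] 0) (𝓝 0) := by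
    have hcont : Continuous fun m => π / 2 * √m := by fun_prop
    simpa using (hcont.tendsto 0).mono_left nhdsWithin_le_nhds
  have hIoo : ∀ᶠ m : ℝ in 𝓝[>] 0, m ∈ Ioo 0 1 := Ioo_mem_nhdsGT one_pos
  refine squeeze_zero' (hIoo.mono fun m hm => ?_) (hIoo.mono fun m hm => ?_) hsqrt
  · exact mul_nonneg hm.1.le (ellipticIntegral_nonneg _ (by linarith [hm.1]))
  · calc m * ellipticK (1 - m) ≤ m * (π / 2 * (1 - (1 - m)) ^ (-1 / 2 : ℝ)) := by
          have := hm.1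
          gcongr
          exact ellipticIntegral_le_of_nonpos (by norm_num) (by linarith [hm.2]) (by linarith)
      _ = π / 2 * √m := by
          rw [sub_sub_cancel, mul_left_comm, ← rpow_one_add' hm.1.le (by norm_num), sqrt_eq_rpow]
          norm_num

lemma tendsto_ellipticK_sub_ellipticE_mul_ellipticK_one_sub :
    Tendsto (fun m => (ellipticK m - ellipticE m) * ellipticK (1 - m)) (𝓝[>] 0) (𝓝 0) := by
  have hbigO : (fun m => ellipticK m - ellipticE m) =O[𝓝[>] 0] fun m => m := by
    have hsub := ((hasDerivAt_ellipticIntegral (-1 / 2) one_pos).sub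
      (hasDerivAt_ellipticIntegral (1 / 2) one_pos)).isBigO_sub.mono
        (nhdsWithin_le_nhds (s := Ioi 0))
    simpa only [Pi.sub_apply, ellipticIntegral_zero_right, sub_self, sub_zero] using hsub
  exact (hbigO.mul (Asymptotics.isBigO_refl _ _)).trans_tendsto tendsto_mul_ellipticK_one_sub

lemma tendsto_legendreCombination : Tendsto legendreCombination (𝓝[>] 0) (𝓝 (π / 2)) := by
  have hK : Tendsto ellipticK (𝓝[>] 0) (𝓝 (π / 2)) := by
    have hcont := (hasDerivAt_ellipticIntegral (-1 / 2) one_pos).continuousAt.tendsto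
    rw [ellipticIntegral_zero_right] at hcont
    exact hcont.mono_left nhdsWithin_le_nhds
  have hE' : Tendsto (fun m => ellipticE (1 - m)) (𝓝[>] 0) (𝓝 1) := by
    have hcont : Continuous fun m => ellipticE (1 - m) :=
      (continuous_ellipticIntegral (by norm_num)).comp (continuous_sub_left 1)
    simpa [ellipticE_one] using (hcont.tendsto 0).mono_left nhdsWithin_le_nhds
  have hlim := (hK.mul hE').sub tendsto_ellipticK_sub_ellipticE_mul_ellipticK_one_sub
  rw [mul_one, sub_zero] at hlim
  refine hlim.congr fun m => ?_
  rw [legendreCombination]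
  ring

theorem legendreCombination_eq_pi_div_two {m : ℝ} (hm : m ∈ Ioo 0 1) :
    legendreCombination m = π / 2 := by
  obtain ⟨c, hc⟩ := isOpen_Ioo.exists_is_const_of_deriv_eq_zero isPreconnected_Ioo
    (fun x hx => (hasDerivAt_legendreCombination hx).differentiableAt.differentiableWithinAt)
    fun x hx => (hasDerivAt_legendreCombination hx).deriv
  have hlim : Tendsto legendreCombination (𝓝[>] 0) (𝓝 c) :=
    tendsto_const_nhds.congr' <| by
      filter_upwards [Ioo_mem_nhdsGT one_pos] with x hx using (hc x hx).symm
  rw [hc m hm, tendsto_nhds_unique hlim tendsto_legendreCombination]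

end LegendreRelation

section LiftedIntegrals

lemma rpow_neg_one_div_two {x : ℝ} (hx : 0 ≤ x) : x ^ (-1 / 2 : ℝ) = 1 / √x := by
  rw [neg_div, rpow_neg hx, ← sqrt_eq_rpow, one_div]

lemma ellipticE_eq_integral_sqrt (m : ℝ) :
    ellipticE m = ∫ θ in (0 : ℝ)..π / 2, √(ellipticRadicand m θ) := by
  simp only [ellipticIntegral, sqrt_eq_rpow]

lemma ellipticK_eq_integral_one_div_sqrt {m : ℝ} (hm : m < 1) :
    ellipticK m = ∫ θ in (0 : ℝ)..π / 2, 1 / √(ellipticRadicand m θ) :=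
  integral_congr fun θ _ => rpow_neg_one_div_two (ellipticRadicand_pos hm θ).le

lemma ellE_eq_ellipticE (k : ℝ) : ellE k = ellipticE (k ^ 2) :=
  (ellipticE_eq_integral_sqrt _).symm

lemma ellK_eq_ellipticK {k : ℝ} (hk : k ^ 2 < 1) : ellK k = ellipticK (k ^ 2) :=
  (ellipticK_eq_integral_one_div_sqrt hk).symm

lemma one_sub_sq_lt_one {k : ℝ} (hk : k ≠ 0) : 1 - k ^ 2 < 1 :=
  sub_lt_self 1 (by positivity)

lemma Ftil_add_two_pi {k : ℝ} (hk : k ≠ 0) (x : ℝ) :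
    Ftil k (x + 2 * π) = Ftil k x + 2 * ellipticK (1 - k ^ 2) := by
  set g : ℝ → ℝ := fun r => 1 / √r
  have hm : 1 - k ^ 2 < 1 := one_sub_sq_lt_one hk
  have hcont : Continuous (g ∘ ellipticRadicand (1 - k ^ 2)) :=
    continuous_const.div (continuous_ellipticRadicand _).sqrt fun θ =>
      (sqrt_pos.2 (ellipticRadicand_pos hm θ)).ne'
  have hperiod := integral_comp_div_two_add_two_mul hcont
    ((ellipticRadicand_periodic _).comp g) ((ellipticRadicand_even _).left_comp g) x
  simp only [g, comp_apply] at hperiod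
  simp only [Ftil, ← ellipticRadicand_one_sub_sq, hperiod, ellipticK_eq_integral_one_div_sqrt hm,
    smul_eq_mul]
  ring

/-- The primitive is `tan θ * (√Δ - k)`, where `Δ` is the radicand, rationalised so as to be regular
at `π / 2`. -/
lemma hasDerivAt_sin_mul_cos_div_sqrt_add {k : ℝ} (hk : 0 < k) (θ : ℝ) :
    HasDerivAt (fun θ => (1 - k ^ 2) * (sin θ * cos θ / (√(ellipticRadicand (1 - k ^ 2) θ) + k)))
      ((1 - k ^ 2) * (1 / (√(ellipticRadicand (1 - k ^ 2) θ) + k))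
        - (1 - k ^ 2) * (sin θ ^ 2 * ellipticRadicand (1 - k ^ 2) θ ^ (-1 / 2 : ℝ))) θ := by
  have hpos := ellipticRadicand_pos (one_sub_sq_lt_one hk.ne') θ
  have hsqrt : 0 < √(ellipticRadicand (1 - k ^ 2) θ) := sqrt_pos.2 hpos
  refine ((((hasDerivAt_sin θ).mul (hasDerivAt_cos θ)).div
    (((hasDerivAt_ellipticRadicand _ θ).sqrt hpos.ne').add_const k)
    (by positivity)).const_mul (1 - k ^ 2)).congr_deriv ?_
  have hcos : cos θ ^ 2 = 1 - sin θ ^ 2 := cos_sq' θ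
  have hparam : (1 - k ^ 2) * cos θ ^ 2 = √(ellipticRadicand (1 - k ^ 2) θ) ^ 2 - k ^ 2 := by
    rw [sq_sqrt hpos.le, ellipticRadicand_one_sub_sq, hcos]
    ring
  rw [rpow_neg_one_div_two hpos.le, Pi.mul_apply]
  generalize √(ellipticRadicand (1 - k ^ 2) θ) = r at *
  field_simp
  linear_combination (1 - k ^ 2) * r * (r + k) * hcos + (1 - k ^ 2) * sin θ ^ 2 * hparam

lemma continuous_one_div_sqrt_add {k : ℝ} (hk : 0 < k) : Continuous fun r => 1 / (√r + k) :=
  continuous_const.div (by fun_prop) fun r => by positivity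

lemma one_sub_sq_mul_integral_one_div_sqrt_add {k : ℝ} (hk : 0 < k) :
    (1 - k ^ 2) * ∫ θ in (0 : ℝ)..π / 2, 1 / (√(ellipticRadicand (1 - k ^ 2) θ) + k) =
      ellipticK (1 - k ^ 2) - ellipticE (1 - k ^ 2) := by
  have hm : 1 - k ^ 2 < 1 := one_sub_sq_lt_one hk.ne'
  have hint₁ : IntervalIntegrable
      (fun θ => (1 - k ^ 2) * (1 / (√(ellipticRadicand (1 - k ^ 2) θ) + k))) volume 0 (π / 2) :=
    (((continuous_one_div_sqrt_add hk).comp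
      (continuous_ellipticRadicand _)).const_mul _).intervalIntegrable _ _
  have hint₂ : IntervalIntegrable
      (fun θ => (1 - k ^ 2) * (sin θ ^ 2 * ellipticRadicand (1 - k ^ 2) θ ^ (-1 / 2 : ℝ)))
      volume 0 (π / 2) :=
    (((continuous_sin.pow 2).mul
      (continuous_ellipticRadicand_rpow hm _)).const_mul _).intervalIntegrable _ _
  have hftc := integral_eq_sub_of_hasDerivAt
    (fun θ _ => hasDerivAt_sin_mul_cos_div_sqrt_add hk θ) (hint₁.sub hint₂)
  rw [integral_sub hint₁ hint₂, intervalIntegral.integral_const_mul,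
    intervalIntegral.integral_const_mul, mul_integral_sin_sq_mul_rpow _ hm,
    show (-1 / 2 + 1 : ℝ) = 1 / 2 by norm_num] at hftc
  simp only [sin_zero, cos_pi_div_two, mul_zero, zero_mul, zero_div, sub_self] at hftc
  exact sub_eq_zero.1 hftc

lemma Etil_add_two_pi {k : ℝ} (hk : 0 < k) (x : ℝ) :
    Etil k (x + 2 * π) =
      Etil k x + 2 * (ellipticK (1 - k ^ 2) - ellipticE (1 - k ^ 2)) := by
  set g : ℝ → ℝ := fun r => 1 / (√r + k)
  have hcont : Continuous (g ∘ ellipticRadicand (1 - k ^ 2)) :=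
    (continuous_one_div_sqrt_add hk).comp (continuous_ellipticRadicand _)
  have hperiod := integral_comp_div_two_add_two_mul hcont
    ((ellipticRadicand_periodic _).comp g) ((ellipticRadicand_even _).left_comp g) x
  simp only [g, comp_apply] at hperiod
  simp only [Etil, ← ellipticRadicand_one_sub_sq, hperiod,
    ← one_sub_sq_mul_integral_one_div_sqrt_add hk, smul_eq_mul]
  ring

end LiftedIntegrals

theorem stmt_10 (k : ℝ) (hk : k ∈ Set.Ioo (0:ℝ) 1) (x : ℝ) :
    ellE k * Ftil k (x + 2*π) - ellK k * Etil k (x + 2*π)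
      = ellE k * Ftil k x - ellK k * Etil k x + π := by
  have hk_sq : k ^ 2 ∈ Ioo 0 1 := ⟨pow_pos hk.1 2, pow_lt_one₀ hk.1.le hk.2 two_ne_zero⟩
  have hlegendre := legendreCombination_eq_pi_div_two hk_sq
  rw [legendreCombination] at hlegendre
  rw [Ftil_add_two_pi hk.1.ne', Etil_add_two_pi hk.1, ellE_eq_ellipticE,
    ellK_eq_ellipticK hk_sq.2]
  linear_combination 2 * hlegendre
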